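/- Let α be a countable ordinal, δ = ω^(α+1), X = [1, δ] with the order topology, G the group of homeomorphisms of X, A_n = [ω^α·(n−1)+1, ω^α·n] for n ≥ 1, and π : G → Sym({1,2,…}) the homomorphism determined by π(g)(m) = n iff g(ω^α·m) = ω^α·n. Then for all g, h ∈ G and every i ≥ 1, (P_i(hg), Q_i(hg)) ∼ (P_i(g), Q_i(g)) + (P_{π(g)(i)}(h), Q_{π(g)(i)}(h)), where P_n(g) = A_{π(g)(n)} \ g(A_n), Q_n(g) = A_n \ g⁻¹(A_{π(g)(n)}), and the sum of pairs is the pair of topological disjoint unions. -/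

import Mathlib

open Ordinal Topology

noncomputable section

/-- The ordinal interval `[1, γ]`, i.e. the set of ordinals `β` with `1 ≤ β ≤ γ`, with the
subspace topology induced from the order topology on `Ordinal` (equivalently, its order
topology, since it is order-connected). -/
abbrev OrdIcc (γ : Ordinal) : Type _ := ↥(Set.Icc (1 : Ordinal) γ)

/-- `X = [1, δ]` where `δ = ω^(α+1)`. -/
abbrev Xsp (α : Ordinal) : Type _ := OrdIcc (omega0 ^ (α + 1))

lemma omega_pow_mul_mem (α : Ordinal) (m : ℕ+) :
    omega0 ^ α * ((m : ℕ) : Ordinal) ∈ Set.Icc (1 : Ordinal) (omega0 ^ (α + 1)) := by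
  constructor
  · have h1 : (1 : Ordinal) ≤ omega0 ^ α := Order.one_le_iff_pos.2 (opow_pos _ omega0_pos)
    have h2 : (1 : Ordinal) ≤ ((m : ℕ) : Ordinal) := by exact_mod_cast m.one_le
    calc (1 : Ordinal) = 1 * 1 := (one_mul 1).symm
      _ ≤ omega0 ^ α * ((m : ℕ) : Ordinal) := mul_le_mul' h1 h2
  · rw [Ordinal.add_one_eq_succ, Ordinal.opow_succ]
    exact mul_le_mul' le_rfl (Ordinal.nat_lt_omega0 m).le

/-- The point `ω^α·m` of `X` (for `m ≥ 1`). -/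
def pt (α : Ordinal) (m : ℕ+) : Xsp α :=
  ⟨omega0 ^ α * ((m : ℕ) : Ordinal), omega_pow_mul_mem α m⟩

/-- `A_n = [ω^α·(n−1)+1, ω^α·n]`, as a subset of `X`. -/
def Ablock (α : Ordinal) (n : ℕ+) : Set (Xsp α) :=
  {x : Xsp α | (x : Ordinal) ∈
    Set.Icc (omega0 ^ α * (((n : ℕ) - 1 : ℕ) : Ordinal) + 1) (omega0 ^ α * ((n : ℕ) : Ordinal))}

/-- The defining property of the homomorphism `π : G → Sym({1,2,…})`:
`π(g)(m) = n` iff `g(ω^α·m) = ω^α·n`. -/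
def IsBlockPerm (α : Ordinal) (π : (Xsp α ≃ₜ Xsp α) → Equiv.Perm ℕ+) : Prop :=
  ∀ (g : Xsp α ≃ₜ Xsp α) (m : ℕ+), g (pt α m) = pt α (π g m)

/-- `P_i(g) = A_{π(g)(i)} \ g(A_i)`. -/
def Pset (α : Ordinal) (π : (Xsp α ≃ₜ Xsp α) → Equiv.Perm ℕ+)
    (g : Xsp α ≃ₜ Xsp α) (i : ℕ+) : Set (Xsp α) :=
  Ablock α (π g i) \ (⇑g '' Ablock α i)

/-- `Q_i(g) = A_i \ g⁻¹(A_{π(g)(i)})`. -/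
def Qset (α : Ordinal) (π : (Xsp α ≃ₜ Xsp α) → Equiv.Perm ℕ+)
    (g : Xsp α ≃ₜ Xsp α) (i : ℕ+) : Set (Xsp α) :=
  Ablock α i \ (⇑g ⁻¹' Ablock α (π g i))

/-- `(P₁, Q₁) ∼ (P₂, Q₂)` iff the topological disjoint union `P₁ ⊔ Q₂` is homeomorphic
to `P₂ ⊔ Q₁`. -/
def PairSim (P₁ Q₁ P₂ Q₂ : Type*) [TopologicalSpace P₁] [TopologicalSpace Q₁]
    [TopologicalSpace P₂] [TopologicalSpace Q₂] : Prop :=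
  Nonempty ((P₁ ⊕ Q₂) ≃ₜ (P₂ ⊕ Q₁))

lemma ablock_clopen (α : Ordinal) (n : ℕ+) : IsClopen (Ablock α n) := by
  constructor
  · exact isClosed_Icc.preimage continuous_subtype_val
  · have : Ablock α n = Subtype.val ⁻¹'
        (Set.Ioo (omega0 ^ α * (((n : ℕ) - 1 : ℕ) : Ordinal)) (omega0 ^ α * ((n : ℕ) : Ordinal) + 1)) := by
      ext x
      simp only [Ablock, Set.mem_setOf_eq, Set.mem_preimage, Set.mem_Icc, Set.mem_Ioo,
        Order.add_one_le_iff, Order.lt_add_one_iff]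
    rw [this]
    exact isOpen_Ioo.preimage continuous_subtype_val

lemma pt_inj (α : Ordinal) {m n : ℕ+} (h : pt α m = pt α n) : m = n := by
  have h1 : omega0 ^ α * ((m : ℕ) : Ordinal) = omega0 ^ α * ((n : ℕ) : Ordinal) :=
    congrArg Subtype.val h
  have h0 : (0 : Ordinal) < omega0 ^ α := opow_pos _ omega0_pos
  have h2 : ((m : ℕ) : Ordinal) = ((n : ℕ) : Ordinal) :=
    le_antisymm ((mul_le_mul_iff_right₀ h0).1 h1.le) ((mul_le_mul_iff_right₀ h0).1 h1.ge)
  exact PNat.coe_injective (by exact_mod_cast h2)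

lemma emb3 {X : Type*} [TopologicalSpace X] {S T R : Set X} (hS : IsOpen S) (hT : IsOpen T)
    (hR : IsOpen R) (a b c : X ≃ₜ X)
    (h1 : ∀ x ∈ S, ∀ y ∈ T, a x ≠ b y) (h2 : ∀ x ∈ S, ∀ y ∈ R, a x ≠ c y)
    (h3 : ∀ x ∈ T, ∀ y ∈ R, b x ≠ c y) :
    IsEmbedding (Sum.elim (fun x : S => a x) (Sum.elim (fun x : T => b x) (fun x : R => c x))) := by
  refine IsOpenEmbedding.isEmbedding (.of_continuous_injective_isOpenMap ?_ ?_ ?_)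
  · fun_prop
  · rintro (⟨x, hx⟩ | ⟨x, hx⟩ | ⟨x, hx⟩) (⟨y, hy⟩ | ⟨y, hy⟩ | ⟨y, hy⟩) hxy <;>
      simp only [Sum.elim_inl, Sum.elim_inr, EmbeddingLike.apply_eq_iff_eq] at hxy
    · subst hxy; rfl
    · exact absurd hxy (h1 _ hx _ hy)
    · exact absurd hxy (h2 _ hx _ hy)
    · exact absurd hxy.symm (h1 _ hy _ hx)
    · subst hxy; rfl
    · exact absurd hxy (h3 _ hx _ hy)
    · exact absurd hxy.symm (h2 _ hy _ hx)
    · exact absurd hxy.symm (h3 _ hy _ hx)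
    · subst hxy; rfl
  · exact (a.isOpenMap.comp hS.isOpenMap_subtype_val).sumElim
      ((b.isOpenMap.comp hT.isOpenMap_subtype_val).sumElim
        (c.isOpenMap.comp hR.isOpenMap_subtype_val))

lemma range3 {X : Type*} [TopologicalSpace X] (S T R : Set X) (a b c : X ≃ₜ X) :
    Set.range (Sum.elim (fun x : S => a x) (Sum.elim (fun x : T => b x) (fun x : R => c x)))
      = {z | a.symm z ∈ S ∨ b.symm z ∈ T ∨ c.symm z ∈ R} := by
  ext z
  simp only [Set.mem_range, Set.mem_setOf_eq, Sum.exists, Sum.elim_inl, Sum.elim_inr,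
    Subtype.exists, exists_prop]
  refine or_congr ?_ (or_congr ?_ ?_) <;>
  · constructor
    · rintro ⟨x, hx, rfl⟩; simpa using hx
    · intro hz; exact ⟨_, hz, by simp⟩

/-- For all `g, h ∈ G` and every `i ≥ 1`,
`(P_i(hg), Q_i(hg)) ∼ (P_i(g), Q_i(g)) + (P_{π(g)(i)}(h), Q_{π(g)(i)}(h))`,
where the sum of pairs is the pair of topological disjoint unions.
(The composite `hg`, acting by `x ↦ h(g(x))`, is `g.trans h`.) -/
theorem pair_sim_comp (α : Ordinal) (hα : α.card ≤ Cardinal.aleph0)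
    (π : (Xsp α ≃ₜ Xsp α) → Equiv.Perm ℕ+) (hπ : IsBlockPerm α π)
    (g h : Xsp α ≃ₜ Xsp α) (i : ℕ+) :
    PairSim ↥(Pset α π (g.trans h) i) ↥(Qset α π (g.trans h) i)
      (↥(Pset α π g i) ⊕ ↥(Pset α π h (π g i)))
      (↥(Qset α π g i) ⊕ ↥(Qset α π h (π g i))) := by
  have hcomp : π (g.trans h) i = π h (π g i) := by
    apply pt_inj α
    rw [← hπ, ← hπ, ← hπ]; rfl
  unfold PairSim Pset Qset
  rw [hcomp]
  have hA := ablock_clopen α i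
  have hB := ablock_clopen α (π g i)
  have hC := ablock_clopen α (π h (π g i))
  generalize Ablock α i = A at *
  generalize Ablock α (π g i) = B at *
  generalize Ablock α (π h (π g i)) = C at *
  have gA : IsClosed (g '' A) := g.isClosedMap _ hA.1
  have hB' : IsClosed (h '' B) := h.isClosedMap _ hB.1
  have hgA : IsClosed ((g.trans h) '' A) := (g.trans h).isClosedMap _ hA.1
  have e1 := emb3 (hC.2.sdiff hgA) (hA.2.sdiff (hB.1.preimage g.continuous))
    (hB.2.sdiff (hC.1.preimage h.continuous)) (g.trans h).symm (Homeomorph.refl _) g.symm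
    (by
      rintro x ⟨hx, hx'⟩ y ⟨hy, hy'⟩ rfl
      exact hx' ⟨_, hy, by simp⟩)
    (by
      rintro x ⟨hx, hx'⟩ y ⟨hy, hy'⟩ e
      have : x = h y := by
        have := congrArg (g.trans h) e
        simpa using this
      subst this
      exact hy' hx)
    (by
      rintro x ⟨hx, hx'⟩ y ⟨hy, hy'⟩ e
      have : x = g.symm y := e
      subst this
      apply hx'; simpa using hy)
  have e2 := emb3 (hB.2.sdiff gA) (hC.2.sdiff hB')
    (hA.2.sdiff (hC.1.preimage (g.trans h).continuous)) g.symm (g.trans h).symm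
    (Homeomorph.refl _)
    (by
      rintro x ⟨hx, hx'⟩ y ⟨hy, hy'⟩ e
      have : h x = y := by
        have := congrArg (g.trans h) e
        simpa using this
      subst this
      exact hy' ⟨x, hx, rfl⟩)
    (by
      rintro x ⟨hx, hx'⟩ y ⟨hy, hy'⟩ e
      have : g.symm x = y := e
      subst this
      exact hx' ⟨_, hy, by simp⟩)
    (by
      rintro x ⟨hx, hx'⟩ y ⟨hy, hy'⟩ e
      have : (g.trans h).symm x = y := e
      subst this
      apply hy'; simpa using hx)
  refine ⟨e1.toHomeomorph.trans ((Homeomorph.setCongr ?_).trans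
    (e2.toHomeomorph.symm.trans (Homeomorph.sumAssoc _ _ _).symm))⟩
  rw [range3, range3]
  ext z
  have k1 : h (g z) ∈ (g.trans h) '' A ↔ z ∈ A :=
    (g.trans h).injective.mem_set_image (a := z)
  have k2 : g z ∈ g '' A ↔ z ∈ A := g.injective.mem_set_image
  have k3 : h (g z) ∈ h '' B ↔ g z ∈ B := h.injective.mem_set_image
  change (h (g z) ∈ C ∧ ¬ h (g z) ∈ (g.trans h) '' A) ∨ (z ∈ A ∧ ¬ g z ∈ B) ∨
      (g z ∈ B ∧ ¬ h (g z) ∈ C) ↔ (g z ∈ B ∧ ¬ g z ∈ g '' A) ∨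
      (h (g z) ∈ C ∧ ¬ h (g z) ∈ h '' B) ∨ (z ∈ A ∧ ¬ h (g z) ∈ C)
  rw [k1, k2, k3]
  tauto
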